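/- Let K = ℚ(√d) be a real quadratic field with d > 1 squarefree and fundamental unit ε > 1. Let p₁ = a₁ + b₁√d and p₂ = a₂ + b₂√d be prime elements of O_K, not in ℤ, not associate to each other, both with positive norm quotient σ₁(p_j)/σ₂(p_j) > 0 and satisfying ε^{-1}|σ₁(p_j)| < |σ₂(p_j)| ≤ ε|σ₁(p_j)| and N(p_j) ≤ 2N. Then b₁a₂ - b₂a₁ ≠ 0, and |Z(p₁) - Z(p₂)| ≥ c₁√d/(8Nε log ε), where Z(p) = log|σ₁(p)/σ₂(p)|/(2 log ε) and c₁ > 0 is a constant with |log x| ≥ c₁|x-1| on [ε^{-2}, ε²]. -/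

import Mathlib

open NumberField

/-!
Let `D = σ₁ p₁ * σ₂ p₂ - σ₂ p₁ * σ₁ p₂ = 2 * (b₁ * a₂ - b₂ * a₁) * √d`. It is an algebraic integer
and a rational multiple of `√d`; since `d` is squarefree, `2 * (b₁ * a₂ - b₂ * a₁)` is an integer,
so `|D| ≥ √d` unless `D = 0`. The balance and norm conditions bound `|σ₂ p₁ * σ₁ p₂|` by
`2 * N * ε`, hence the quotient of the two ratios `σ₁ pⱼ / σ₂ pⱼ` differs from `1` by at least
`√d / (2 * N * ε)`, and the hypothesis on `c₁` carries this over to logarithms.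

If `D = 0` then `p₁ / p₂` is rational, so `p₂ ∣ p₁` as soon as no rational integer other than `±1`
divides `p₂`. An irreducible divisible by such an integer is a unit times it; the balance condition
forces that unit to be `±1`, so that the irreducible lies in `ℤ`.
-/

section IntPrimitive

variable {R : Type*} [CommRing R] {x y : R}

/-- Primitivity of `x` over `ℤ`: a rational integer divides `x` only if it is a unit of `R`. In a
ring of integers the rational integers that are units are `±1`. -/
def IsIntPrimitive (x : R) : Prop :=
  ∀ n : ℤ, (n : R) ∣ x → IsUnit (n : R)

theorem IsIntPrimitive.ne_zero [Nontrivial R] (hx : IsIntPrimitive x) : x ≠ 0 := by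
  rintro rfl
  simpa using hx 0 (dvd_zero _)

theorem IsIntPrimitive.dvd_of_intCast_mul_eq (hy : IsIntPrimitive y) {m n : ℤ}
    (hmn : IsCoprime m n) (h : (n : R) * x = m * y) : y ∣ x := by
  have hn : (n : R) ∣ y := hmn.symm.intCast.dvd_of_dvd_mul_left (Dvd.intro x h)
  exact (hy n hn).dvd_mul_left.mp (Dvd.intro_left (m : R) h.symm)

theorem IsIntPrimitive.dvd_of_eq_ratCast_mul {K : Type*} [Field K] [CharZero K] {x y : 𝓞 K}
    (hy : IsIntPrimitive y) {r : ℚ} (h : (x : K) = r * (y : K)) : y ∣ x := by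
  refine hy.dvd_of_intCast_mul_eq r.isCoprime_num_den (RingOfIntegers.ext ?_)
  have hr : (r.den : K) * r = r.num := mod_cast r.den_mul_eq_num
  simp only [map_mul, map_intCast, map_natCast, h, Int.cast_natCast, ← mul_assoc, hr]

end IntPrimitive

theorem exists_eq_mul_and_eq_mul_of_mul_eq_mul {F : Type*} [Field F] {a₁ b₁ a₂ b₂ : F}
    (h : b₁ * a₂ = b₂ * a₁) (h₂ : a₂ ≠ 0 ∨ b₂ ≠ 0) : ∃ r, a₁ = r * a₂ ∧ b₁ = r * b₂ := by
  rcases h₂ with ha | hb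
  · exact ⟨a₁ / a₂, by field_simp, by field_simp; linear_combination h⟩
  · exact ⟨b₁ / b₂, by field_simp; linear_combination -h, by field_simp⟩

theorem IsIntPrimitive.det_ne_zero {K : Type*} [Field K] [CharZero K] {x y : 𝓞 K} {s : K}
    {a₁ b₁ a₂ b₂ : ℚ} (hx : (x : K) = algebraMap ℚ K a₁ + algebraMap ℚ K b₁ * s)
    (hy : (y : K) = algebraMap ℚ K a₂ + algebraMap ℚ K b₂ * s)
    (hprim : IsIntPrimitive y) (hyx : ¬ y ∣ x) : b₁ * a₂ - b₂ * a₁ ≠ 0 := by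
  intro hdet
  have hy₀ : a₂ ≠ 0 ∨ b₂ ≠ 0 := by
    by_contra! h
    exact hprim.ne_zero (RingOfIntegers.ext (by simp [hy, h]))
  obtain ⟨r, rfl, rfl⟩ := exists_eq_mul_and_eq_mul_of_mul_eq_mul (sub_eq_zero.mp hdet) hy₀
  refine hyx (hprim.dvd_of_eq_ratCast_mul (r := r) ?_)
  rw [hx, hy, ← eq_ratCast (algebraMap ℚ K) r, map_mul, map_mul]
  ring

theorem isIntegral_of_isIntegral_sq_mul_of_isRadical {R F : Type*} [CommRing R]
    [IsIntegrallyClosed R] [Field F] [Algebra R F] [IsFractionRing R F] {d : R} (hd : IsRadical d)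
    (hd₀ : d ≠ 0) {q : F} (hq : IsIntegral R (q ^ 2 * algebraMap R F d)) : IsIntegral R q := by
  obtain ⟨k, hk⟩ := IsIntegrallyClosed.isIntegral_iff.mp hq
  have hqd : IsIntegral R ((q * algebraMap R F d) ^ 2) := by
    rw [mul_pow, sq (algebraMap R F d), ← mul_assoc]
    exact hq.mul isIntegral_algebraMap
  obtain ⟨m, hm⟩ := IsIntegrallyClosed.exists_algebraMap_eq_of_isIntegral_pow two_pos hqd
  have hsq : m ^ 2 = d * k := by
    apply IsFractionRing.injective R F
    rw [map_pow, map_mul, hm, hk]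
    ring
  obtain ⟨n, rfl⟩ := hd 2 m (Dvd.intro k hsq.symm)
  rw [map_mul, mul_comm q] at hm
  have hd₀' : algebraMap R F d ≠ 0 := by simpa using hd₀
  rw [← mul_left_cancel₀ hd₀' hm]
  exact isIntegral_algebraMap

theorem one_le_abs_of_isIntegral_mul_sqrt {d : ℕ} (hd : Squarefree d) {q : ℚ} (hq₀ : q ≠ 0)
    (hq : IsIntegral ℤ (q * √d : ℝ)) : 1 ≤ |q| := by
  have hsq : IsIntegral ℤ (q ^ 2 * algebraMap ℤ ℚ d) := by
    have hcast : ((q ^ 2 * algebraMap ℤ ℚ d : ℚ) : ℝ) = (q * √d) ^ 2 := by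
      rw [mul_pow, Real.sq_sqrt d.cast_nonneg]
      simp
    exact IsIntegral.ratCast_iff.mp (hcast ▸ hq.pow 2)
  have hint : IsIntegral ℤ q :=
    isIntegral_of_isIntegral_sq_mul_of_isRadical (Int.squarefree_natCast.mpr hd).isRadical
      (mod_cast hd.ne_zero) hsq
  obtain ⟨n, rfl⟩ := IsIntegrallyClosed.isIntegral_iff.mp hint
  simp only [algebraMap_int_eq, eq_intCast, ne_eq, Int.cast_eq_zero] at hq₀ ⊢
  exact_mod_cast Int.one_le_abs hq₀

theorem map_mul_map_sub_map_mul_map_eq_det_mul {K L : Type*} [Field K] [CharZero K] [Field L]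
    (σ₁ σ₂ : K →+* L) {x y s : K} {a₁ b₁ a₂ b₂ : ℚ}
    (hx : x = algebraMap ℚ K a₁ + algebraMap ℚ K b₁ * s)
    (hy : y = algebraMap ℚ K a₂ + algebraMap ℚ K b₂ * s) :
    σ₁ x * σ₂ y - σ₂ x * σ₁ y = (b₁ * a₂ - b₂ * a₁) * (σ₁ s - σ₂ s) := by
  simp only [hx, hy, map_add, map_mul, eq_ratCast, map_ratCast]
  ring

theorem sqrt_le_abs_map_mul_map_sub {K : Type*} [Field K] [CharZero K] {σ₁ σ₂ : K →+* ℝ} {d : ℕ}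
    (hd : Squarefree d) {s : K} (hs₁ : σ₁ s = √d) (hs₂ : σ₂ s = -√d) {x y : 𝓞 K}
    {a₁ b₁ a₂ b₂ : ℚ} (hx : (x : K) = algebraMap ℚ K a₁ + algebraMap ℚ K b₁ * s)
    (hy : (y : K) = algebraMap ℚ K a₂ + algebraMap ℚ K b₂ * s)
    (hdet : b₁ * a₂ - b₂ * a₁ ≠ 0) :
    √d ≤ |σ₁ x * σ₂ y - σ₂ x * σ₁ y| := by
  have hD : σ₁ x * σ₂ y - σ₂ x * σ₁ y = (2 * (b₁ * a₂ - b₂ * a₁) : ℚ) * √d := by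
    rw [map_mul_map_sub_map_mul_map_eq_det_mul σ₁ σ₂ hx hy, hs₁, hs₂]
    push_cast
    ring
  have hint (σ : K →+* ℝ) (z : 𝓞 K) : IsIntegral ℤ (σ z) := z.isIntegral_coe.map σ.toIntAlgHom
  have hDint : IsIntegral ℤ (σ₁ x * σ₂ y - σ₂ x * σ₁ y) :=
    ((hint σ₁ x).mul (hint σ₂ y)).sub ((hint σ₂ x).mul (hint σ₁ y))
  have hone : 1 ≤ |2 * (b₁ * a₂ - b₂ * a₁)| :=
    one_le_abs_of_isIntegral_mul_sqrt hd (mul_ne_zero two_ne_zero hdet) (hD ▸ hDint)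
  rw [hD, abs_mul, abs_of_nonneg (Real.sqrt_nonneg d)]
  exact le_mul_of_one_le_left (Real.sqrt_nonneg d) (mod_cast hone)

section Balanced

/-- The pair `(x, y)` of conjugates is balanced with respect to `E`: up to sign, the ratio `y / x`
lies in the interval `(E⁻¹, E]`. When `E` is the fundamental unit `ε`, multiplying by `ε` moves
`|y / x|` by the factor `ε⁻²`, so this selects at most one associate up to sign. -/
def IsBalanced (E x y : ℝ) : Prop :=
  E⁻¹ * |x| < |y| ∧ |y| ≤ E * |x|

variable {E x y x₁ y₁ x₂ y₂ : ℝ}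

theorem IsBalanced.of_mul_left {c : ℝ} (hc : c ≠ 0) (h : IsBalanced E (c * x) (c * y)) :
    IsBalanced E x y := by
  have hc' : 0 < |c| := abs_pos.mpr hc
  simpa only [IsBalanced, abs_mul, mul_left_comm _ |c|, mul_lt_mul_iff_right₀ hc',
    mul_le_mul_iff_right₀ hc'] using h

theorem IsBalanced.abs_le_mul (hE : 0 < E) (h : IsBalanced E x y) : |x| ≤ E * |y| :=
  (inv_mul_le_iff₀ hE).mp h.1.le

theorem IsBalanced.eq_zero_of_zpow {n : ℤ} (hE : 1 < E) (h : IsBalanced E (E ^ n) (E ^ (-n))) :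
    n = 0 := by
  have hE₀ : E ≠ 0 := by positivity
  obtain ⟨hlt, hle⟩ := h
  simp only [abs_zpow, abs_of_pos (one_pos.trans hE)] at hlt hle
  rw [← zpow_neg_one, ← zpow_add₀ hE₀, zpow_lt_zpow_iff_right₀ hE] at hlt
  rw [← zpow_one_add₀ hE₀, zpow_le_zpow_iff_right₀ hE] at hle
  omega

theorem IsBalanced.div_div_div_mem_Icc (hE : 0 < E) (h₁ : IsBalanced E x₁ y₁)
    (h₂ : IsBalanced E x₂ y₂) (hpos₁ : 0 < x₁ / y₁) (hpos₂ : 0 < x₂ / y₂) :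
    x₁ / y₁ / (x₂ / y₂) ∈ Set.Icc (E ^ 2)⁻¹ (E ^ 2) := by
  have hratio {x y : ℝ} (h : IsBalanced E x y) (hpos : 0 < x / y) : x / y ∈ Set.Icc E⁻¹ E := by
    have hy : 0 < |y| := abs_pos.mpr (by rintro rfl; simp at hpos)
    rw [← abs_of_pos hpos, abs_div, Set.mem_Icc, le_div_iff₀ hy, div_le_iff₀ hy,
      inv_mul_le_iff₀ hE]
    exact ⟨h.2, h.abs_le_mul hE⟩
  obtain ⟨hl₁, hu₁⟩ := hratio h₁ hpos₁
  obtain ⟨hl₂, hu₂⟩ := hratio h₂ hpos₂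
  constructor
  · calc (E ^ 2)⁻¹ = E⁻¹ / E := by field_simp
      _ ≤ x₁ / y₁ / (x₂ / y₂) := by gcongr
  · calc x₁ / y₁ / (x₂ / y₂) ≤ E / E⁻¹ := by gcongr
      _ = E ^ 2 := by field_simp

theorem abs_mul_le_of_abs_mul_le {M : ℝ} (hE : 0 ≤ E) (hy₁ : |y₁| ≤ E * |x₁|)
    (hx₂ : |x₂| ≤ E * |y₂|) (h₁ : |x₁ * y₁| ≤ M) (h₂ : |x₂ * y₂| ≤ M) :
    |y₁ * x₂| ≤ M * E := by
  rw [abs_mul] at h₁ h₂ ⊢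
  have hsq₁ : |y₁| ^ 2 ≤ M * E := by
    calc |y₁| ^ 2 ≤ E * |x₁| * |y₁| := by rw [sq]; gcongr
      _ = |x₁| * |y₁| * E := by ring
      _ ≤ M * E := by gcongr
  have hsq₂ : |x₂| ^ 2 ≤ M * E := by
    calc |x₂| ^ 2 ≤ |x₂| * (E * |y₂|) := by rw [sq]; gcongr
      _ = |x₂| * |y₂| * E := by ring
      _ ≤ M * E := by gcongr
  linarith [two_mul_le_add_sq |y₁| |x₂|]

theorem IsBalanced.le_abs_log_sub_log {M c : ℝ} (hE : 0 < E) (hc : 0 ≤ c)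
    (h₁ : IsBalanced E x₁ y₁) (h₂ : IsBalanced E x₂ y₂)
    (hpos₁ : 0 < x₁ / y₁) (hpos₂ : 0 < x₂ / y₂) (hM₁ : |x₁ * y₁| ≤ M) (hM₂ : |x₂ * y₂| ≤ M)
    (hlog : ∀ t ∈ Set.Icc (E ^ 2)⁻¹ (E ^ 2), c * |t - 1| ≤ |Real.log t|) :
    c * (|x₁ * y₂ - y₁ * x₂| / (M * E)) ≤ |Real.log (x₁ / y₁) - Real.log (x₂ / y₂)| := by
  obtain ⟨-, hy₁⟩ := div_ne_zero_iff.mp hpos₁.ne'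
  obtain ⟨hx₂, -⟩ := div_ne_zero_iff.mp hpos₂.ne'
  have hquot : x₁ / y₁ / (x₂ / y₂) - 1 = (x₁ * y₂ - y₁ * x₂) / (y₁ * x₂) := by field_simp
  calc c * (|x₁ * y₂ - y₁ * x₂| / (M * E)) ≤ c * (|x₁ * y₂ - y₁ * x₂| / |y₁ * x₂|) := by
        gcongr
        exact abs_mul_le_of_abs_mul_le hE.le h₁.2 (h₂.abs_le_mul hE) hM₁ hM₂
    _ = c * |x₁ / y₁ / (x₂ / y₂) - 1| := by rw [hquot, abs_div]
    _ ≤ |Real.log (x₁ / y₁ / (x₂ / y₂))| :=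
        hlog _ (h₁.div_div_div_mem_Icc hE h₂ hpos₁ hpos₂)
    _ = |Real.log (x₁ / y₁) - Real.log (x₂ / y₂)| := by
        rw [Real.log_div hpos₁.ne' hpos₂.ne']

end Balanced

section Units

theorem algebraMap_norm_eq_mul_of_finrank_eq_two {F K E : Type*} [Field F] [Field K] [Field E]
    [Algebra F K] [Algebra F E] [FiniteDimensional F K] [Algebra.IsSeparable F K]
    (hdeg : Module.finrank F K = 2) {σ₁ σ₂ : K →ₐ[F] E} (hσ : σ₁ ≠ σ₂) (x : K) :
    algebraMap F E (Algebra.norm F x) = σ₁ x * σ₂ x := by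
  classical
  let ι : E →ₐ[F] AlgebraicClosure E := IsScalarTower.toAlgHom F E (AlgebraicClosure E)
  have hne : ι.comp σ₁ ≠ ι.comp σ₂ := fun h =>
    hσ (AlgHom.ext fun z => ι.injective (DFunLike.congr_fun h z))
  have huniv : {ι.comp σ₁, ι.comp σ₂} = (Finset.univ : Finset (K →ₐ[F] AlgebraicClosure E)) := by
    rw [← Finset.card_eq_iff_eq_univ, Finset.card_pair hne, AlgHom.card, hdeg]
  refine (RingHom.injective (ι : E →+* AlgebraicClosure E)) (?_ : ι _ = ι _)
  rw [AlgHom.commutes, Algebra.norm_eq_prod_embeddings F (AlgebraicClosure E), ← huniv,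
    Finset.prod_pair hne, map_mul]
  rfl

variable {K : Type*} [Field K] [NumberField K] {σ₁ σ₂ : K →+* ℝ}

theorem abs_map_unit_mul_abs_map_unit_eq_one (hdeg : Module.finrank ℚ K = 2) (hσ : σ₁ ≠ σ₂)
    (u : (𝓞 K)ˣ) : |σ₁ (u : K)| * |σ₂ (u : K)| = 1 := by
  have hnorm := algebraMap_norm_eq_mul_of_finrank_eq_two hdeg
    ((RingHom.equivRatAlgHom (R := K) (S := ℝ)).injective.ne hσ) (u : K)
  calc |σ₁ (u : K)| * |σ₂ (u : K)| = |((Algebra.norm ℚ (u : K) : ℚ) : ℝ)| := by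
        rw [← abs_mul]; exact congrArg _ hnorm.symm
    _ = 1 := by rw [← Rat.cast_abs, NumberField.Units.norm, Rat.cast_one]

variable {ε : (𝓞 K)ˣ}

theorem eq_one_or_eq_neg_one_of_isBalanced (hdeg : Module.finrank ℚ K = 2) (hσ : σ₁ ≠ σ₂)
    (hε : 1 < σ₁ (ε : K)) {u : (𝓞 K)ˣ} (hu : ∃ n : ℤ, u = ε ^ n ∨ u = -ε ^ n)
    (hbal : IsBalanced (σ₁ (ε : K)) (σ₁ (u : K)) (σ₂ (u : K))) : u = 1 ∨ u = -1 := by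
  obtain ⟨n, hn⟩ := hu
  have hpow : |σ₁ ((ε ^ n : (𝓞 K)ˣ) : K)| = σ₁ (ε : K) ^ n := by
    rw [Units.coe_zpow, map_zpow₀, abs_zpow, abs_of_pos (one_pos.trans hε)]
  have h₁ : |σ₁ (u : K)| = σ₁ (ε : K) ^ n := by
    rcases hn with rfl | rfl
    · exact hpow
    · simpa only [Units.val_neg, map_neg, abs_neg] using hpow
  have h₂ : |σ₂ (u : K)| = σ₁ (ε : K) ^ (-n) := by
    rw [zpow_neg, ← h₁]
    exact eq_inv_of_mul_eq_one_right (abs_map_unit_mul_abs_map_unit_eq_one hdeg hσ u)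
  obtain rfl : n = 0 := IsBalanced.eq_zero_of_zpow hε (by
    rw [← h₁, ← h₂]
    simpa only [IsBalanced, abs_abs] using hbal)
  simpa only [zpow_zero] using hn

theorem isIntPrimitive_of_irreducible_of_isBalanced (hdeg : Module.finrank ℚ K = 2) (hσ : σ₁ ≠ σ₂)
    (hε : 1 < σ₁ (ε : K)) (hunits : ∀ u : (𝓞 K)ˣ, ∃ n : ℤ, u = ε ^ n ∨ u = -ε ^ n)
    {p : 𝓞 K} (hp : Irreducible p) (hpZ : ¬ ∃ m : ℤ, (p : K) = m)
    (hbal : IsBalanced (σ₁ (ε : K)) (σ₁ p) (σ₂ p)) : IsIntPrimitive p := by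
  rintro n ⟨w, rfl⟩
  refine (hp.isUnit_or_isUnit rfl).resolve_right ?_
  rintro ⟨u, rfl⟩
  have hn : (n : ℝ) ≠ 0 := by
    rintro hn
    obtain rfl : n = 0 := mod_cast hn
    exact hp.ne_zero (by simp)
  have hu : IsBalanced (σ₁ (ε : K)) (σ₁ (u : K)) (σ₂ (u : K)) :=
    IsBalanced.of_mul_left hn (by simpa using hbal)
  rcases eq_one_or_eq_neg_one_of_isBalanced hdeg hσ hε (hunits u) hu with rfl | rfl
  · exact hpZ ⟨n, by simp⟩
  · exact hpZ ⟨-n, by simp⟩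

end Units

theorem stmt14_general {K : Type*} [Field K] [CharZero K] {σ₁ σ₂ : K →+* ℝ} {d : ℕ}
    (hsf : Squarefree d) {sqd : K} (hσ1d : σ₁ sqd = √d) (hσ2d : σ₂ sqd = -√d)
    {E N c : ℝ} (hE : 1 < E) (hc : 0 ≤ c) {p₁ p₂ : 𝓞 K} (hprim : IsIntPrimitive p₂)
    (hdvd : ¬ p₂ ∣ p₁) {a₁ b₁ a₂ b₂ : ℚ}
    (hrep₁ : (p₁ : K) = algebraMap ℚ K a₁ + algebraMap ℚ K b₁ * sqd)
    (hrep₂ : (p₂ : K) = algebraMap ℚ K a₂ + algebraMap ℚ K b₂ * sqd)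
    (hpos₁ : 0 < σ₁ p₁ / σ₂ p₁) (hpos₂ : 0 < σ₁ p₂ / σ₂ p₂)
    (hbal₁ : IsBalanced E (σ₁ p₁) (σ₂ p₁)) (hbal₂ : IsBalanced E (σ₁ p₂) (σ₂ p₂))
    (hN₁ : |σ₁ p₁ * σ₂ p₁| ≤ 2 * N) (hN₂ : |σ₁ p₂ * σ₂ p₂| ≤ 2 * N)
    (hlog : ∀ x ∈ Set.Icc (E ^ (2 : ℤ))⁻¹ (E ^ (2 : ℤ)), c * |x - 1| ≤ |Real.log x|) :
    b₁ * a₂ - b₂ * a₁ ≠ 0 ∧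
    |Real.log |σ₁ p₁ / σ₂ p₁| / (2 * Real.log E) - Real.log |σ₁ p₂ / σ₂ p₂| / (2 * Real.log E)| ≥
      c * √d / (4 * N * E * Real.log E) := by
  have hdet := hprim.det_ne_zero hrep₁ hrep₂ hdvd
  refine ⟨hdet, ?_⟩
  have hE₀ : 0 < E := one_pos.trans hE
  have hlogE : 0 < Real.log E := Real.log_pos hE
  have hN : 0 ≤ 2 * N := (abs_nonneg _).trans hN₁
  have hsqrt := sqrt_le_abs_map_mul_map_sub hsf hσ1d hσ2d hrep₁ hrep₂ hdet
  have hgap := hbal₁.le_abs_log_sub_log hE₀ hc hbal₂ hpos₁ hpos₂ hN₁ hN₂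
    (by simpa only [zpow_ofNat] using hlog)
  rw [Real.log_abs, Real.log_abs, ← sub_div, abs_div,
    abs_of_pos (by positivity : 0 < 2 * Real.log E)]
  calc c * √d / (4 * N * E * Real.log E) = c * (√d / (2 * N * E)) / (2 * Real.log E) := by
        field_simp; ring
    _ ≤ c * (|σ₁ p₁ * σ₂ p₂ - σ₂ p₁ * σ₁ p₂| / (2 * N * E)) / (2 * Real.log E) := by gcongr
    _ ≤ |Real.log (σ₁ p₁ / σ₂ p₁) - Real.log (σ₁ p₂ / σ₂ p₂)| / (2 * Real.log E) := by gcongr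

/-- Spacing of the quantities `Z(p) = log|σ₁(p)/σ₂(p)|/(2 log ε)` for
non-associate prime elements `p₁ = a₁ + b₁√d`, `p₂ = a₂ + b₂√d` of a real
quadratic field, not in `ℤ`, with positive `σ₁/σ₂`, balanced conjugates and
norm at most `2N`: then `b₁a₂ - b₂a₁ ≠ 0` and
`|Z(p₁) - Z(p₂)| ≥ c₁√d/(8Nε log ε)`. -/
theorem stmt14 (K : Type*) [Field K] [NumberField K]
    (hdeg : Module.finrank ℚ K = 2)
    (σ₁ σ₂ : K →+* ℝ) (hσ : σ₁ ≠ σ₂)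
    (d : ℕ) (hd : 1 < d) (hsf : Squarefree d)
    (sqd : K) (hsqd : sqd * sqd = (d : K))
    (hσ1d : σ₁ sqd = Real.sqrt d) (hσ2d : σ₂ sqd = -Real.sqrt d)
    (ε : (𝓞 K)ˣ) (hε : 1 < σ₁ ((ε : 𝓞 K) : K))
    (hunits : ∀ u : (𝓞 K)ˣ, ∃ n : ℤ, u = ε ^ n ∨ u = -ε ^ n)
    (N : ℝ) (hN : 0 < N)
    (p₁ p₂ : 𝓞 K) (hp₁ : Prime p₁) (hp₂ : Prime p₂)
    (a₁ b₁ a₂ b₂ : ℚ)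
    (hrep₁ : (p₁ : K) = algebraMap ℚ K a₁ + algebraMap ℚ K b₁ * sqd)
    (hrep₂ : (p₂ : K) = algebraMap ℚ K a₂ + algebraMap ℚ K b₂ * sqd)
    (hz₁ : ¬ ∃ m : ℤ, (p₁ : K) = (m : K)) (hz₂ : ¬ ∃ m : ℤ, (p₂ : K) = (m : K))
    (hassoc : ¬ Associated p₁ p₂)
    (hpos₁ : 0 < σ₁ (p₁ : K) / σ₂ (p₁ : K)) (hpos₂ : 0 < σ₁ (p₂ : K) / σ₂ (p₂ : K))
    (hbal₁ : (σ₁ ((ε : 𝓞 K) : K))⁻¹ * |σ₁ (p₁ : K)| < |σ₂ (p₁ : K)| ∧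
      |σ₂ (p₁ : K)| ≤ σ₁ ((ε : 𝓞 K) : K) * |σ₁ (p₁ : K)|)
    (hbal₂ : (σ₁ ((ε : 𝓞 K) : K))⁻¹ * |σ₁ (p₂ : K)| < |σ₂ (p₂ : K)| ∧
      |σ₂ (p₂ : K)| ≤ σ₁ ((ε : 𝓞 K) : K) * |σ₁ (p₂ : K)|)
    (hN₁ : |σ₁ (p₁ : K) * σ₂ (p₁ : K)| ≤ 2 * N)
    (hN₂ : |σ₁ (p₂ : K) * σ₂ (p₂ : K)| ≤ 2 * N)
    (c₁ : ℝ) (hc₁ : 0 < c₁)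
    (hlog : ∀ x ∈ Set.Icc ((σ₁ ((ε : 𝓞 K) : K)) ^ (2 : ℤ))⁻¹
        ((σ₁ ((ε : 𝓞 K) : K)) ^ (2 : ℤ)), c₁ * |x - 1| ≤ |Real.log x|) :
    b₁ * a₂ - b₂ * a₁ ≠ 0 ∧
    |Real.log |σ₁ (p₁ : K) / σ₂ (p₁ : K)| / (2 * Real.log (σ₁ ((ε : 𝓞 K) : K))) -
        Real.log |σ₁ (p₂ : K) / σ₂ (p₂ : K)| / (2 * Real.log (σ₁ ((ε : 𝓞 K) : K)))| ≥
      c₁ * Real.sqrt d /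
        (8 * N * σ₁ ((ε : 𝓞 K) : K) * Real.log (σ₁ ((ε : 𝓞 K) : K))) := by
  have hprim :=
    isIntPrimitive_of_irreducible_of_isBalanced hdeg hσ hε hunits hp₂.irreducible hz₂ hbal₂
  have hlogε := Real.log_pos hε
  exact (stmt14_general hsf hσ1d hσ2d hε hc₁.le hprim
    (fun h => hassoc (hp₂.associated_of_dvd hp₁ h).symm) hrep₁ hrep₂ hpos₁ hpos₂ hbal₁ hbal₂
    hN₁ hN₂ hlog).imp_right (le_trans (by gcongr; norm_num))
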